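/- Theorem 7 (accelerated Distributed PD3O algorithm, O(1/k²) rate): Suppose the average function (1/M)·Σ_{m=1}^M F_m is μ_F̂-strongly convex and R is μ_R-strongly convex, with μ_F̂ + μ_R > 0, and let x* be the unique minimizer of Ψ. Let κ ∈ (0,1), γ₀ ∈ (0, 2(1−κ)/L), γ₁ = γ₀, where L satisfies the averaged smoothness condition (1/M²)·Σ_m (1/ω_m)·‖∇F_m(x) − ∇F_m(x')‖² ≤ L²·‖x − x'‖² for all x, x', and for every k ≥ 1 set γ_{k+1} = (−γ_k²μ_F̂κ + γ_k·√((γ_kμ_F̂κ)² + 1 + 2γ_kμ_R)) / (1 + 2γ_kμ_R). Suppose η ≥ max_m ‖K_m‖². Then there exists ĉ₀ > 0 such that for every k ≥ 1 the Distributed PD3O iterates satisfy ‖x^{k+1} − x*‖² ≤ (γ_{k+1}²/(1 − γ_{k+1}μ_F̂κ))·ĉ₀; in particular there exists C ≥ 0 with ‖x^{k+1} − x*‖² ≤ C/(k+1)² for all k ≥ 1. -/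

import Mathlib

/-!
Write `t = 1/γₖ` and measure the errors `Qₘ` of the messages `qₘᵏ` and `Vₘ` of the dual variables
`uₘᵏ` by the energy `∑ₘ (‖Qₘ‖² - 2⟪Vₘ, Kₘ Qₘ⟫ + η‖Vₘ‖²) / (M² ωₘ)`, which is nonnegative because
`‖Kₘ‖² ≤ η`. Strong monotonicity of `∂R` shows that the half step `Qₘ - M ωₘ t (xᵏ⁺¹ - x*)` lowers
the energy by `(t² + 2 μ_R t)‖xᵏ⁺¹ - x*‖²`. Monotonicity of `∂Hₘ` bounds the next energy by that of
the half step plus `∑ₘ ‖Qₘ'‖² / (M² ωₘ)`, where `Qₘ'` is the next message error. With `t' = 1/γₖ₊₁`,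
cocoercivity of the gradients `∇Fₘ` bounds this sum by `(t'² - 2 μ_F κ t')‖xᵏ⁺¹ - x*‖²` once `t'` is
large, and the step-size rule makes the loss and the gain cancel. Since `t` grows linearly in `k`,
the energy is eventually nonincreasing, hence bounded; so `(t² + 2 μ_R t)‖xᵏ⁺¹ - x*‖²` is bounded.
-/

open Filter Topology RealInnerProductSpace

noncomputable section

/-- `p` is a minimizer of `y ↦ σ·G(y) + (1/2)‖y − z‖²`, i.e. `p = prox_{σG}(z)`
(the minimizer is unique when `G` is convex). -/
def IsProxPt {E : Type*} [NormedAddCommGroup E] [InnerProductSpace ℝ E]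
    (σ : ℝ) (G : E → ℝ) (z p : E) : Prop :=
  ∀ y, σ * G p + ‖p - z‖ ^ 2 / 2 ≤ σ * G y + ‖y - z‖ ^ 2 / 2

/-- `u ∈ ∂G(z)`. -/
def IsSubgradientAt {E : Type*} [NormedAddCommGroup E] [InnerProductSpace ℝ E]
    (G : E → ℝ) (z u : E) : Prop :=
  ∀ y, G z + ⟪u, y - z⟫ ≤ G y

section Subgradient

variable {E : Type*} [NormedAddCommGroup E] [InnerProductSpace ℝ E]
  {G : E → ℝ} {μ : ℝ} {y z u v : E}

/-- A quadratic error `c‖y − z‖²` is negligible at first order, so convexity removes it. -/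
lemma le_of_strongConvexOn_of_forall_le_add_sq (hG : StrongConvexOn Set.univ μ G) {c : ℝ}
    (h : ∀ y, G z + ⟪u, y - z⟫ ≤ G y + c * ‖y - z‖ ^ 2) (y : E) :
    G z + ⟪u, y - z⟫ + μ / 2 * ‖y - z‖ ^ 2 ≤ G y := by
  have along_segment : ∀ t ∈ Set.Ioo (0 : ℝ) 1,
      G z + ⟪u, y - z⟫ + (1 - t) * (μ / 2 * ‖y - z‖ ^ 2) - t * (c * ‖y - z‖ ^ 2) ≤ G y := by
    rintro t ⟨ht, ht1⟩
    have hconv := hG.2 (Set.mem_univ z) (Set.mem_univ y) (sub_nonneg.2 ht1.le) ht.le (by ring)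
    have hle := h ((1 - t) • z + t • y)
    rw [show (1 - t) • z + t • y - z = t • (y - z) by module, real_inner_smul_right, norm_smul,
      mul_pow, Real.norm_eq_abs, sq_abs] at hle
    simp only [smul_eq_mul, norm_sub_rev z y] at hconv
    refine le_of_mul_le_mul_left ?_ ht
    linarith
  have hlim : Tendsto (fun t : ℝ => G z + ⟪u, y - z⟫ + (1 - t) * (μ / 2 * ‖y - z‖ ^ 2)
      - t * (c * ‖y - z‖ ^ 2)) (𝓝[>] 0) (𝓝 (G z + ⟪u, y - z⟫ + μ / 2 * ‖y - z‖ ^ 2)) := by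
    refine (Continuous.tendsto' ?_ _ _ ?_).mono_left nhdsWithin_le_nhds
    · fun_prop
    · simp
  exact le_of_tendsto hlim (mem_of_superset (Ioo_mem_nhdsGT one_pos) along_segment)

lemma IsProxPt.isSubgradientAt {σ : ℝ} {p : E} (hp : IsProxPt σ G z p)
    (hG : ConvexOn ℝ Set.univ G) (hσ : 0 < σ) : IsSubgradientAt G p (σ⁻¹ • (z - p)) := by
  have hquad : ∀ y, G p + ⟪σ⁻¹ • (z - p), y - p⟫ ≤ G y + σ⁻¹ / 2 * ‖y - p‖ ^ 2 := by
    intro y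
    have hy := hp y
    rw [show y - z = (y - p) - (z - p) by abel, norm_sub_sq_real (y - p), norm_sub_rev p z,
      real_inner_comm] at hy
    rw [real_inner_smul_left]
    refine le_of_mul_le_mul_left ?_ hσ
    have hcancel : σ * σ⁻¹ = 1 := mul_inv_cancel₀ hσ.ne'
    linear_combination hy + (⟪z - p, y - p⟫ - ‖y - p‖ ^ 2 / 2) * hcancel
  intro y
  simpa using le_of_strongConvexOn_of_forall_le_add_sq (strongConvexOn_zero.2 hG) hquad y

lemma IsSubgradientAt.of_hasGradientAt [CompleteSpace E] (hG : ConvexOn ℝ Set.univ G)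
    (hu : HasGradientAt G u z) : IsSubgradientAt G z u := by
  intro y
  have hline : ConvexOn ℝ Set.univ (G ∘ AffineMap.lineMap (k := ℝ) z y) :=
    hG.comp_affineMap (AffineMap.lineMap z y)
  have hderiv : HasDerivAt (G ∘ AffineMap.lineMap (k := ℝ) z y) ⟪u, y - z⟫ 0 := by
    have hfderiv : HasFDerivAt G (InnerProductSpace.toDual ℝ E u)
        (AffineMap.lineMap (k := ℝ) z y 0) := by
      simpa only [AffineMap.lineMap_apply_zero] using hu.hasFDerivAt
    exact hfderiv.comp_hasDerivAt (0 : ℝ) AffineMap.hasDerivAt_lineMap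
  have hslope := hline.le_slope_of_hasDerivAt (Set.mem_univ 0) (Set.mem_univ 1) one_pos hderiv
  simp only [slope_def_field, Function.comp_apply, AffineMap.lineMap_apply_one,
    AffineMap.lineMap_apply_zero, sub_zero, div_one] at hslope
  linarith

lemma IsSubgradientAt.const_mul_sum {ι : Type*} [Fintype ι] {f : ι → E → ℝ} {g : ι → E} {c : ℝ}
    (hc : 0 ≤ c) (h : ∀ m, IsSubgradientAt (f m) z (g m)) :
    IsSubgradientAt (fun x => c * ∑ m, f m x) z (c • ∑ m, g m) := by
  intro y
  simp only [real_inner_smul_left, sum_inner, ← mul_add, ← Finset.sum_add_distrib]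
  gcongr with m
  exact h m y

lemma IsSubgradientAt.mul_norm_sub_sq_le_inner (hG : StrongConvexOn Set.univ μ G)
    (hu : IsSubgradientAt G z u) (hv : IsSubgradientAt G y v) :
    μ * ‖z - y‖ ^ 2 ≤ ⟪u - v, z - y⟫ := by
  have hz := le_of_strongConvexOn_of_forall_le_add_sq (c := 0) hG
    (by simpa [IsSubgradientAt] using hu) y
  have hy := le_of_strongConvexOn_of_forall_le_add_sq (c := 0) hG
    (by simpa [IsSubgradientAt] using hv) z
  rw [← neg_sub z y, norm_neg, inner_neg_right] at hz
  rw [inner_sub_left]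
  linarith

lemma IsSubgradientAt.inner_sub_nonneg (hu : IsSubgradientAt G z u) (hv : IsSubgradientAt G y v) :
    0 ≤ ⟪u - v, z - y⟫ := by
  have hz := hu y
  have hy := hv z
  rw [← neg_sub z y, inner_neg_right] at hz
  rw [inner_sub_left]
  linarith

lemma IsProxPt.isSubgradientAt_moreau {σ : ℝ} {p : E} (hp : IsProxPt σ G (σ • v) p)
    (hG : ConvexOn ℝ Set.univ G) (hσ : 0 < σ) : IsSubgradientAt G p (v - σ⁻¹ • p) := by
  simpa only [smul_sub, inv_smul_smul₀ hσ.ne'] using hp.isSubgradientAt hG hσ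

lemma IsProxPt.mul_norm_sub_sq_le_inner {γ : ℝ} {p r : E} (hp : IsProxPt γ G z p)
    (hG : StrongConvexOn Set.univ μ G) (hμ : 0 ≤ μ) (hγ : 0 < γ) (hr : IsSubgradientAt G y r) :
    (γ⁻¹ + μ) * ‖p - y‖ ^ 2 ≤ ⟪γ⁻¹ • (z - y) - r, p - y⟫ := by
  have hconv : ConvexOn ℝ Set.univ G := strongConvexOn_zero.1 (hG.mono hμ)
  have hmono := (hp.isSubgradientAt hconv hγ).mul_norm_sub_sq_le_inner hG hr
  rw [show γ⁻¹ • (z - p) - r = γ⁻¹ • (z - y) - r - γ⁻¹ • (p - y) by module, inner_sub_left,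
    real_inner_smul_left, real_inner_self_eq_norm_sq] at hmono
  linarith

end Subgradient

section Cocoercivity

variable {E : Type*} [NormedAddCommGroup E] [InnerProductSpace ℝ E]
  {f : E → ℝ} {g : E → E} {l : ℝ}

lemma le_add_inner_add_of_lipschitz_subgradient (hf : ∀ z, IsSubgradientAt f z (g z))
    (hg : ∀ z z', ‖g z - g z'‖ ≤ l * ‖z - z'‖) (x y : E) :
    f y ≤ f x + ⟪g x, y - x⟫ + l * ‖y - x‖ ^ 2 := by
  have hsub := hf y x
  have hinner : ⟪g y - g x, y - x⟫ ≤ l * ‖y - x‖ ^ 2 :=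
    calc ⟪g y - g x, y - x⟫ ≤ ‖g y - g x‖ * ‖y - x‖ := real_inner_le_norm _ _
      _ ≤ l * ‖y - x‖ * ‖y - x‖ := by gcongr; exact hg y x
      _ = l * ‖y - x‖ ^ 2 := by ring
  rw [inner_sub_left] at hinner
  rw [← neg_sub y x, inner_neg_right] at hsub
  linarith

lemma add_inner_add_norm_sub_sq_le_of_lipschitz_subgradient
    (hf : ∀ z, IsSubgradientAt f z (g z)) (hl : 0 < l)
    (hg : ∀ z z', ‖g z - g z'‖ ≤ l * ‖z - z'‖) (x y : E) :
    f y + ⟪g y, x - y⟫ + ‖g x - g y‖ ^ 2 / (4 * l) ≤ f x := by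
  -- compare both points with a gradient step from `x` on `f - ⟪g y, ·⟫`
  set s := (1 / (2 * l)) • (g x - g y) with hs
  have hlower := hf y (x - s)
  have hupper := le_add_inner_add_of_lipschitz_subgradient hf hg x (x - s)
  have hinner : ⟪g x, s⟫ - ⟪g y, s⟫ = 2 * (‖g x - g y‖ ^ 2 / (4 * l)) := by
    rw [← inner_sub_left, hs, real_inner_smul_right, real_inner_self_eq_norm_sq]
    field_simp
    ring
  have hnorm : l * ‖s‖ ^ 2 = ‖g x - g y‖ ^ 2 / (4 * l) := by
    rw [hs, norm_smul, mul_pow, Real.norm_eq_abs, sq_abs]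
    field_simp
    ring
  rw [sub_right_comm, inner_sub_right] at hlower
  rw [sub_sub_cancel_left, norm_neg, inner_neg_right, hnorm] at hupper
  linarith

lemma norm_sub_sq_le_of_lipschitz_subgradient (hf : ∀ z, IsSubgradientAt f z (g z)) (hl : 0 < l)
    (hg : ∀ z z', ‖g z - g z'‖ ≤ l * ‖z - z'‖) (x y : E) :
    ‖g x - g y‖ ^ 2 ≤ 2 * l * ⟪g x - g y, x - y⟫ := by
  have hx := add_inner_add_norm_sub_sq_le_of_lipschitz_subgradient hf hl hg x y
  have hy := add_inner_add_norm_sub_sq_le_of_lipschitz_subgradient hf hl hg y x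
  rw [norm_sub_rev (g y), ← neg_sub x y, inner_neg_right] at hy
  have hsum : ‖g x - g y‖ ^ 2 / (2 * l) ≤ ⟪g x - g y, x - y⟫ := by
    rw [inner_sub_left]
    have : ‖g x - g y‖ ^ 2 / (2 * l) = 2 * (‖g x - g y‖ ^ 2 / (4 * l)) := by field_simp; ring
    linarith
  rwa [div_le_iff₀' (by positivity)] at hsum

end Cocoercivity

section Stepsizes

/-- The step size following `g` in the accelerated scheme, for strong convexity constants `a` of
the smooth part (in the theorem, `a = μ_F κ`) and `b` of the proximal part. -/
def acceleratedStepsize (a b g : ℝ) : ℝ :=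
  (-(g ^ 2 * a) + g * √((g * a) ^ 2 + 1 + 2 * g * b)) / (1 + 2 * g * b)

lemma acceleratedStepsize_pos {a b g : ℝ} (hb : 0 ≤ b) (hg : 0 < g) :
    0 < acceleratedStepsize a b g := by
  have hsqrt : g * a < √((g * a) ^ 2 + 1 + 2 * g * b) := by
    apply Real.lt_sqrt_of_sq_lt
    have : 0 ≤ g * b := by positivity
    linarith
  refine div_pos ?_ (by positivity)
  linear_combination g * hsqrt

lemma acceleratedStepsize_inv_recursion {a b g : ℝ} (hb : 0 ≤ b) (hg : 0 < g) :
    (acceleratedStepsize a b g)⁻¹ ^ 2 - 2 * a * (acceleratedStepsize a b g)⁻¹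
      = g⁻¹ ^ 2 + 2 * b * g⁻¹ := by
  have hpos := acceleratedStepsize_pos (a := a) hb hg
  set g' := acceleratedStepsize a b g with hg'
  have hden : 0 < 1 + 2 * g * b := by positivity
  have hsqrt := Real.sq_sqrt (show 0 ≤ (g * a) ^ 2 + 1 + 2 * g * b by positivity)
  have hroot : g' * (1 + 2 * g * b) + g ^ 2 * a = g * √((g * a) ^ 2 + 1 + 2 * g * b) := by
    rw [hg', acceleratedStepsize, div_mul_cancel₀ _ hden.ne']
    ring
  have hquad : (1 + 2 * g * b) * g' ^ 2 + 2 * a * g ^ 2 * g' - g ^ 2 = 0 := by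
    refine (mul_eq_zero.1 ?_).resolve_left hden.ne'
    linear_combination (g' * (1 + 2 * g * b) + g ^ 2 * a
      + g * √((g * a) ^ 2 + 1 + 2 * g * b)) * hroot + g ^ 2 * hsqrt
  field_simp
  linear_combination -hquad

/-- The recursion satisfied from index `1` on by the reciprocals `tₖ = 1/γₖ` of the accelerated
step sizes; it is the form in which the step-size rule enters the energy estimates. -/
structure IsInvStepsizes (a b : ℝ) (t : ℕ → ℝ) : Prop where
  pos : ∀ k, 1 ≤ k → 0 < t k
  recursion : ∀ k, 1 ≤ k → t (k + 1) ^ 2 - 2 * a * t (k + 1) = t k ^ 2 + 2 * b * t k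

lemma isInvStepsizes_of_acceleratedStepsize {a b : ℝ} {γ : ℕ → ℝ} (hb : 0 ≤ b) (hγ : 0 < γ 1)
    (hrec : ∀ k, 1 ≤ k → γ (k + 1) = acceleratedStepsize a b (γ k)) :
    IsInvStepsizes a b (fun k => (γ k)⁻¹) := by
  have hpos : ∀ k, 1 ≤ k → 0 < γ k := by
    intro k hk
    induction k, hk using Nat.le_induction with
    | base => exact hγ
    | succ k hk ih => exact hrec k hk ▸ acceleratedStepsize_pos hb ih
  refine ⟨fun k hk => inv_pos.2 (hpos k hk), fun k hk => ?_⟩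
  simp only [hrec k hk]
  exact acceleratedStepsize_inv_recursion hb (hpos k hk)

namespace IsInvStepsizes

variable {a b : ℝ} {t : ℕ → ℝ} {k : ℕ}

lemma two_mul_lt (ht : IsInvStepsizes a b t) (hb : 0 ≤ b) (hk : 1 ≤ k) : 2 * a < t (k + 1) := by
  have htk := ht.pos k hk
  have hprod : 0 < t (k + 1) * (t (k + 1) - 2 * a) :=
    calc 0 < t k ^ 2 + 2 * b * t k := by positivity
      _ = t (k + 1) * (t (k + 1) - 2 * a) := by rw [← ht.recursion k hk]; ring
  linarith [(pos_iff_pos_of_mul_pos hprod).1 (ht.pos (k + 1) (by omega))]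

lemma sub_mul_eq (ht : IsInvStepsizes a b t) (hk : 1 ≤ k) :
    (t (k + 1) - t k) * (t (k + 1) + t k + b - a) = (a + b) * (t (k + 1) + t k) := by
  linear_combination ht.recursion k hk

lemma lt_succ (ht : IsInvStepsizes a b t) (hb : 0 ≤ b) (hab : 0 < a + b)
    (hk : 1 ≤ k) : t k < t (k + 1) := by
  have htk := ht.pos k hk
  have htk' := ht.pos (k + 1) (by omega)
  have hprod : 0 < (t (k + 1) - t k) * (t (k + 1) + t k + b - a) := by
    rw [ht.sub_mul_eq hk]
    positivity
  have hfactor : 0 < t (k + 1) + t k + b - a := by linarith [ht.two_mul_lt hb hk]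
  linarith [(pos_iff_pos_of_mul_pos hprod).2 hfactor]

lemma monotoneOn (ht : IsInvStepsizes a b t) (hb : 0 ≤ b) (hab : 0 < a + b) :
    MonotoneOn t (Set.Ici 1) :=
  monotoneOn_nat_Ici_of_le_succ fun _ hk => (ht.lt_succ hb hab hk).le

lemma add_le_succ (ht : IsInvStepsizes a b t) (ha : 0 ≤ a) (hb : 0 ≤ b) (hab : 0 < a + b)
    (hk : 1 ≤ k) : t k + (a + b) * t 1 / (t 1 + (a + b)) ≤ t (k + 1) := by
  have ht1 := ht.pos 1 le_rfl
  have h1k : t 1 ≤ t k := ht.monotoneOn hb hab (Set.mem_Ici.2 le_rfl) hk hk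
  have htk' := ht.pos (k + 1) (by omega)
  have hfactor : 0 < t (k + 1) + t k + b - a := by linarith [ht.two_mul_lt hb hk]
  have hincr : t (k + 1) - t k = (a + b) * (t (k + 1) + t k) / (t (k + 1) + t k + b - a) := by
    rw [eq_div_iff hfactor.ne', ht.sub_mul_eq hk]
  have hcross : t 1 * (t (k + 1) + t k + b - a) ≤ (t (k + 1) + t k) * (t 1 + (a + b)) := by
    have hsum : t 1 * (a + b) ≤ (t (k + 1) + t k) * (a + b) := by gcongr; linarith
    have hta : 0 ≤ t 1 * a := by positivity
    linarith
  suffices (a + b) * t 1 / (t 1 + (a + b)) ≤ t (k + 1) - t k by linarith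
  rw [hincr, div_le_div_iff₀ (by positivity) hfactor]
  linear_combination (a + b) * hcross

lemma exists_mul_le (ht : IsInvStepsizes a b t) (ha : 0 ≤ a) (hb : 0 ≤ b) (hab : 0 < a + b) :
    ∃ c, 0 < c ∧ ∀ k, 1 ≤ k → c * k ≤ t k := by
  have ht1 := ht.pos 1 le_rfl
  refine ⟨(a + b) * t 1 / (t 1 + (a + b)), by positivity, fun k hk => ?_⟩
  induction k, hk using Nat.le_induction with
  | base =>
    rw [Nat.cast_one, mul_one, div_le_iff₀ (by positivity)]
    linear_combination sq_nonneg (t 1)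
  | succ k hk ih =>
    push_cast
    linarith [ht.add_le_succ ha hb hab hk]

lemma tendsto_atTop (ht : IsInvStepsizes a b t) (ha : 0 ≤ a) (hb : 0 ≤ b) (hab : 0 < a + b) :
    Tendsto t atTop atTop := by
  obtain ⟨c, hc, hlin⟩ := ht.exists_mul_le ha hb hab
  exact tendsto_atTop_mono' atTop ((eventually_ge_atTop 1).mono hlin)
    (tendsto_natCast_atTop_atTop.const_mul_atTop hc)

lemma exists_mul_sq_le (ht : IsInvStepsizes a b t) (ha : 0 ≤ a) (hb : 0 ≤ b) (hab : 0 < a + b) :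
    ∃ θ, 0 < θ ∧ ∀ k, 1 ≤ k → θ * t (k + 1) ^ 2 ≤ t k ^ 2 + 2 * b * t k := by
  have ht2 : 0 < t 2 := ht.pos 2 one_le_two
  refine ⟨1 - 2 * a / t 2, ?_, fun k hk => ?_⟩
  · rw [sub_pos, div_lt_one ht2]
    exact ht.two_mul_lt hb le_rfl
  · have htk' := ht.pos (k + 1) (by omega)
    have h2k : t 2 ≤ t (k + 1) :=
      ht.monotoneOn hb hab (Set.mem_Ici.2 one_le_two) (Set.mem_Ici.2 (by omega)) (by omega)
    have hle : 2 * a ≤ 2 * a / t 2 * t (k + 1) := by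
      rw [div_mul_eq_mul_div, le_div_iff₀ ht2]
      gcongr
    rw [← ht.recursion k hk]
    linear_combination t (k + 1) * hle

lemma exists_rate (ht : IsInvStepsizes a b t) (ha : 0 ≤ a) (hb : 0 ≤ b) (hab : 0 < a + b)
    {D : ℕ → ℝ} {B : ℝ} (hD : ∀ k, 0 ≤ D k)
    (hDB : ∀ k, 1 ≤ k → (t k ^ 2 + 2 * b * t k) * D (k + 1) ≤ B) :
    ∃ c₀, 0 < c₀ ∧ (∀ k, 1 ≤ k → D (k + 1) ≤ (t (k + 1))⁻¹ ^ 2 / (1 - (t (k + 1))⁻¹ * a) * c₀) ∧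
      ∃ C, 0 ≤ C ∧ ∀ k : ℕ, 1 ≤ k → D (k + 1) ≤ C / ((k : ℝ) + 1) ^ 2 := by
  obtain ⟨θ, hθ, hθt⟩ := ht.exists_mul_sq_le ha hb hab
  obtain ⟨c, hc, hlin⟩ := ht.exists_mul_le ha hb hab
  have hbound : ∀ k, 1 ≤ k → t (k + 1) ^ 2 * D (k + 1) ≤ (|B| + 1) / θ := by
    intro k hk
    rw [le_div_iff₀' hθ]
    calc θ * (t (k + 1) ^ 2 * D (k + 1)) = θ * t (k + 1) ^ 2 * D (k + 1) := by ring
      _ ≤ (t k ^ 2 + 2 * b * t k) * D (k + 1) := by gcongr; exacts [hD _, hθt k hk]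
      _ ≤ |B| + 1 := by linarith [hDB k hk, le_abs_self B]
  refine ⟨(|B| + 1) / θ, by positivity, fun k hk => ?_, (|B| + 1) / θ / c ^ 2, by positivity,
    fun k hk => ?_⟩
  · have htk' := ht.pos (k + 1) (by omega)
    have hlt : (t (k + 1))⁻¹ * a < 1 := by
      rw [inv_mul_lt_one₀ htk']
      linarith [ht.two_mul_lt hb hk]
    have hnonneg : 0 ≤ (t (k + 1))⁻¹ * a := by positivity
    calc D (k + 1) = (t (k + 1))⁻¹ ^ 2 * (t (k + 1) ^ 2 * D (k + 1)) := by field_simp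
      _ ≤ (t (k + 1))⁻¹ ^ 2 * ((|B| + 1) / θ) := by gcongr; exact hbound k hk
      _ ≤ (t (k + 1))⁻¹ ^ 2 / (1 - (t (k + 1))⁻¹ * a) * ((|B| + 1) / θ) := by
        gcongr
        exact le_div_self (by positivity) (by linarith) (by linarith)
  · rw [div_div, le_div_iff₀' (by positivity), ← mul_pow]
    refine le_trans ?_ (hbound k hk)
    have := hD (k + 1)
    gcongr
    exact_mod_cast hlin (k + 1) (by omega)

end IsInvStepsizes

lemma bddAbove_range_of_eventually_succ_le {e : ℕ → ℝ} (h : ∀ᶠ k in atTop, e (k + 1) ≤ e k) :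
    BddAbove (Set.range e) := by
  obtain ⟨N, hN⟩ := eventually_atTop.1 h
  have hanti : AntitoneOn e (Set.Ici N) := antitoneOn_nat_Ici_of_succ_le hN
  exact (isBoundedUnder_of_eventually_le <| (eventually_ge_atTop N).mono fun k hk =>
    hanti (Set.mem_Ici.2 le_rfl) hk hk).bddAbove_range

end Stepsizes

section Energy

variable {E : Type*} [NormedAddCommGroup E] [InnerProductSpace ℝ E]

section Node

variable {U : Type*} [NormedAddCommGroup U] [InnerProductSpace ℝ U]
  {K : E →L[ℝ] U} {η : ℝ}

/-- The energy of a primal error `Q` and a dual error `V` at one node: the quadratic form of the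
preconditioner of the primal-dual step, scaled so that it does not involve the step sizes. -/
def nodeEnergy (K : E →L[ℝ] U) (η : ℝ) (Q : E) (V : U) : ℝ :=
  ‖Q‖ ^ 2 - 2 * ⟪V, K Q⟫ + η * ‖V‖ ^ 2

lemma nodeEnergy_nonneg (hη : ‖K‖ ^ 2 ≤ η) (Q : E) (V : U) : 0 ≤ nodeEnergy K η Q V := by
  have hinner : ⟪V, K Q⟫ ≤ ‖V‖ * (‖K‖ * ‖Q‖) :=
    (real_inner_le_norm V (K Q)).trans (by gcongr; exact K.le_opNorm Q)
  calc 0 ≤ (‖Q‖ - ‖K‖ * ‖V‖) ^ 2 := sq_nonneg _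
    _ = ‖Q‖ ^ 2 - 2 * (‖V‖ * (‖K‖ * ‖Q‖)) + ‖K‖ ^ 2 * ‖V‖ ^ 2 := by ring
    _ ≤ nodeEnergy K η Q V := by unfold nodeEnergy; gcongr

lemma nodeEnergy_sub_smul (Q d : E) (V : U) (s : ℝ) :
    nodeEnergy K η (Q - s • d) V =
      nodeEnergy K η Q V - 2 * s * (⟪Q, d⟫ - ⟪V, K d⟫) + s ^ 2 * ‖d‖ ^ 2 := by
  simp only [nodeEnergy, norm_sub_sq_real, map_sub, map_smul, inner_sub_right,
    real_inner_smul_right, norm_smul, mul_pow, Real.norm_eq_abs, sq_abs]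
  ring

lemma nodeEnergy_le_add_of_inner_nonneg (hη : ‖K‖ ^ 2 ≤ η) {Q Q' : E} {V V' : U}
    (h : 0 ≤ ⟪V', η • (V - V') + K (Q' - Q)⟫) :
    nodeEnergy K η Q' V' ≤ ‖Q'‖ ^ 2 + nodeEnergy K η Q V := by
  have hdiff := nodeEnergy_nonneg hη Q (V - V')
  simp only [nodeEnergy, norm_sub_sq_real, inner_sub_left] at hdiff
  simp only [inner_add_right, real_inner_smul_right, inner_sub_right, map_sub,
    real_inner_self_eq_norm_sq, real_inner_comm V V'] at h
  unfold nodeEnergy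
  linarith

end Node

variable {ι : Type*} [Fintype ι] {U : ι → Type*} [∀ m, NormedAddCommGroup (U m)]
  [∀ m, InnerProductSpace ℝ (U m)] {K : ∀ m, E →L[ℝ] U m} {η N : ℝ} {ω : ι → ℝ}

/-- The total energy of the nodes. The weights `1 / (N² ωₘ)` are those of the averaged smoothness
condition; here `N` stands for the number `M` of nodes. -/
def energy (K : ∀ m, E →L[ℝ] U m) (η N : ℝ) (ω : ι → ℝ) (Q : ι → E) (V : ∀ m, U m) : ℝ :=
  ∑ m, (N ^ 2 * ω m)⁻¹ * nodeEnergy (K m) η (Q m) (V m)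

lemma energy_nonneg (hη : ∀ m, ‖K m‖ ^ 2 ≤ η) (hω : ∀ m, 0 < ω m) (Q : ι → E) (V : ∀ m, U m) :
    0 ≤ energy K η N ω Q V :=
  Finset.sum_nonneg fun m _ =>
    have := hω m
    mul_nonneg (by positivity) (nodeEnergy_nonneg (hη m) _ _)

lemma energy_sub_smul (hN : N ≠ 0) (hω : ∀ m, 0 < ω m) (hωsum : ∑ m, ω m = 1)
    (Q : ι → E) (V : ∀ m, U m) (d : E) (t : ℝ) :
    energy K η N ω (fun m => Q m - (N * ω m * t) • d) V = energy K η N ω Q V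
      - 2 * t * (N⁻¹ * ∑ m, (⟪Q m, d⟫ - ⟪V m, K m d⟫)) + t ^ 2 * ‖d‖ ^ 2 := by
  have hnode : ∀ m, (N ^ 2 * ω m)⁻¹ * nodeEnergy (K m) η (Q m - (N * ω m * t) • d) (V m) =
      (N ^ 2 * ω m)⁻¹ * nodeEnergy (K m) η (Q m) (V m)
        - 2 * t * N⁻¹ * (⟪Q m, d⟫ - ⟪V m, K m d⟫) + ω m * (t ^ 2 * ‖d‖ ^ 2) := by
    intro m
    have hωm := (hω m).ne'
    rw [nodeEnergy_sub_smul]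
    field_simp
  simp only [energy, hnode, Finset.sum_add_distrib, Finset.sum_sub_distrib, ← Finset.mul_sum,
    ← Finset.sum_mul, hωsum]
  ring

lemma energy_sub_smul_le {μ t : ℝ} {Q : ι → E} {V : ∀ m, U m} {d : E} (hN : N ≠ 0)
    (hω : ∀ m, 0 < ω m) (hωsum : ∑ m, ω m = 1) (ht : 0 ≤ t)
    (h : (t + μ) * ‖d‖ ^ 2 ≤ N⁻¹ * ∑ m, (⟪Q m, d⟫ - ⟪V m, K m d⟫)) :
    energy K η N ω (fun m => Q m - (N * ω m * t) • d) V ≤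
      energy K η N ω Q V - (t ^ 2 + 2 * μ * t) * ‖d‖ ^ 2 := by
  rw [energy_sub_smul hN hω hωsum]
  linear_combination 2 * t * h

lemma energy_le_add_of_inner_nonneg (hη : ∀ m, ‖K m‖ ^ 2 ≤ η) (hω : ∀ m, 0 < ω m)
    {Q Q' : ι → E} {V V' : ∀ m, U m}
    (h : ∀ m, 0 ≤ ⟪V' m, η • (V m - V' m) + K m (Q' m - Q m)⟫) :
    energy K η N ω Q' V' ≤ ∑ m, (N ^ 2 * ω m)⁻¹ * ‖Q' m‖ ^ 2 + energy K η N ω Q V := by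
  simp only [energy, ← Finset.sum_add_distrib, ← mul_add]
  gcongr with m
  · have := hω m
    positivity
  · exact nodeEnergy_le_add_of_inner_nonneg (hη m) (h m)

end Energy

section ForwardStep

variable {E ι : Type*} [NormedAddCommGroup E] [InnerProductSpace ℝ E] [Fintype ι]
  {F : ι → E → ℝ} {F' : ι → E → E} {N : ℝ} {ω : ι → ℝ}

lemma exists_sum_mul_norm_sub_sq_le_of_lipschitz (hF : ∀ m z, IsSubgradientAt (F m) z (F' m z))
    (hlip : ∀ m, ∃ l : ℝ, 0 < l ∧ ∀ z z', ‖F' m z - F' m z'‖ ≤ l * ‖z - z'‖)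
    {c : ι → ℝ} (hc : ∀ m, 0 ≤ c m) :
    ∃ Λ, ∀ x y, ∑ m, c m * ‖F' m x - F' m y‖ ^ 2 ≤ Λ * ∑ m, ⟪F' m x - F' m y, x - y⟫ := by
  choose l hl hlip using hlip
  have hnonneg : ∀ m, 0 ≤ c m * (2 * l m) := fun m => mul_nonneg (hc m) (by linarith [hl m])
  refine ⟨∑ m, c m * (2 * l m), fun x y => ?_⟩
  rw [Finset.mul_sum]
  refine Finset.sum_le_sum fun m _ => ?_
  have hinner := (hF m x).inner_sub_nonneg (hF m y)
  calc c m * ‖F' m x - F' m y‖ ^ 2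
      ≤ c m * (2 * l m * ⟪F' m x - F' m y, x - y⟫) := by
        gcongr
        exacts [hc m, norm_sub_sq_le_of_lipschitz_subgradient (hF m) (hl m) (hlip m) x y]
    _ = c m * (2 * l m) * ⟪F' m x - F' m y, x - y⟫ := by ring
    _ ≤ (∑ m, c m * (2 * l m)) * ⟪F' m x - F' m y, x - y⟫ := by
        gcongr
        exact Finset.single_le_sum (fun m _ => hnonneg m) (Finset.mem_univ m)

lemma sum_mul_norm_smul_sub_sq (hN : N ≠ 0) (hω : ∀ m, 0 < ω m) (hωsum : ∑ m, ω m = 1)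
    (d : E) (t : ℝ) (Q : ι → E) :
    ∑ m, (N ^ 2 * ω m)⁻¹ * ‖(N * ω m * t) • d - Q m‖ ^ 2 =
      t ^ 2 * ‖d‖ ^ 2 - 2 * t * (N⁻¹ * ∑ m, ⟪Q m, d⟫) + ∑ m, (N ^ 2 * ω m)⁻¹ * ‖Q m‖ ^ 2 := by
  have h := energy_sub_smul (K := fun _ => (0 : E →L[ℝ] E)) (η := 0) hN hω hωsum Q 0 d t
  simp only [energy, nodeEnergy, Pi.zero_apply, inner_zero_left, mul_zero, zero_mul, sub_zero,
    add_zero] at h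
  simp only [norm_sub_rev _ (Q _)]
  rw [h]
  ring

/-- Cocoercivity has an uncontrolled constant `Λ` here; a fraction `1 - κ` of the gain
`2t⟪∇F x - ∇F y, x - y⟫` absorbs it as soon as `t` is large. -/
lemma eventually_sum_mul_norm_smul_sub_sq_le (hN : 0 < N) (hω : ∀ m, 0 < ω m)
    (hωsum : ∑ m, ω m = 1) (hF : ∀ m z, IsSubgradientAt (F m) z (F' m z))
    (hlip : ∀ m, ∃ l : ℝ, 0 < l ∧ ∀ z z', ‖F' m z - F' m z'‖ ≤ l * ‖z - z'‖) {μ κ : ℝ}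
    (hFsc : StrongConvexOn Set.univ μ fun z => (1 / N) * ∑ m, F m z) (hκ : 0 ≤ κ) (hκ1 : κ < 1) :
    ∀ᶠ t : ℝ in atTop, ∀ x y : E,
      ∑ m, (N ^ 2 * ω m)⁻¹ * ‖(N * ω m * t) • (x - y) - (F' m x - F' m y)‖ ^ 2 ≤
        (t ^ 2 - 2 * (μ * κ) * t) * ‖x - y‖ ^ 2 := by
  obtain ⟨Λ, hΛ⟩ := exists_sum_mul_norm_sub_sq_le_of_lipschitz hF hlip
    (c := fun m => (N ^ 2 * ω m)⁻¹) fun m => by have := hω m; positivity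
  filter_upwards [eventually_ge_atTop 0, eventually_ge_atTop (Λ * N / (2 * (1 - κ)))]
    with t ht hΛt x y
  set S := ∑ m, ⟪F' m x - F' m y, x - y⟫ with hS
  have hS_nonneg : 0 ≤ S := Finset.sum_nonneg fun m _ => (hF m x).inner_sub_nonneg (hF m y)
  have hstrong : μ * ‖x - y‖ ^ 2 ≤ N⁻¹ * S := by
    have hsub := fun z => IsSubgradientAt.const_mul_sum (one_div_nonneg.2 hN.le) fun m => hF m z
    have h := (hsub x).mul_norm_sub_sq_le_inner hFsc (hsub y)
    rwa [← smul_sub, ← Finset.sum_sub_distrib, real_inner_smul_left, sum_inner, one_div] at h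
  have habsorb : Λ * S ≤ 2 * t * (1 - κ) * (N⁻¹ * S) := by
    rw [div_le_iff₀ (by linarith), ← le_div_iff₀ hN] at hΛt
    calc Λ * S ≤ t * (2 * (1 - κ)) / N * S := by gcongr
      _ = 2 * t * (1 - κ) * (N⁻¹ * S) := by ring
  rw [sum_mul_norm_smul_sub_sq hN.ne' hω hωsum, ← hS]
  linear_combination hΛ x y + habsorb + 2 * t * κ * hstrong

end ForwardStep

section DistributedPD3O

variable {𝒳 : Type*} [NormedAddCommGroup 𝒳] [InnerProductSpace ℝ 𝒳]
  {ι : Type*} {𝒰 : ι → Type*} [∀ m, NormedAddCommGroup (𝒰 m)] [∀ m, InnerProductSpace ℝ (𝒰 m)]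

/-- The deviation of the message `q` of node `m`, formed with the reciprocal step size `t`, from
its value at the solution. -/
def primalError (F' : ι → 𝒳 → 𝒳) (N : ℝ) (ω : ι → ℝ) (xstar : 𝒳) (t : ℝ) (q : ι → 𝒳) : ι → 𝒳 :=
  fun m => q m - ((N * ω m * t) • xstar - F' m xstar)

variable [Fintype ι]

/-- The energy of the errors of the `k`-th Distributed PD3O iterate. -/
def iterateEnergy (K : ∀ m, 𝒳 →L[ℝ] 𝒰 m) (F' : ι → 𝒳 → 𝒳) (N η : ℝ) (ω : ι → ℝ) (γ : ℕ → ℝ)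
    (q : ℕ → ι → 𝒳) (u : ℕ → ∀ m, 𝒰 m) (xstar : 𝒳) (hstar : ∀ m, 𝒰 m) (k : ℕ) : ℝ :=
  energy K η N ω (primalError F' N ω xstar (γ k)⁻¹ (q k)) fun m => u k m - hstar m

variable [CompleteSpace 𝒳] [∀ m, CompleteSpace (𝒰 m)]

/-- The optimality conditions of the composite problem at `xstar`, witnessed by the subgradients
`rstar` of `R` and `hstar m` of `H m`; here `F' m` is the gradient of the smooth part at node `m`
and `N` stands for the number `M` of nodes. -/
structure IsPrimalDualSolution (K : ∀ m, 𝒳 →L[ℝ] 𝒰 m) (R : 𝒳 → ℝ) (F' : ι → 𝒳 → 𝒳)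
    (H : ∀ m, 𝒰 m → ℝ) (N : ℝ) (xstar rstar : 𝒳) (hstar : ∀ m, 𝒰 m) : Prop where
  primal : IsSubgradientAt R xstar rstar
  dual : ∀ m, IsSubgradientAt (H m) (K m xstar) (hstar m)
  stationary : rstar + (1 / N) •
    ∑ m, (F' m xstar + (ContinuousLinearMap.adjoint (K m)) (hstar m)) = 0

/-- The iterates of Distributed PD3O, with `N` for the number `M` of nodes. The dual proximal step
is expressed through the Moreau identity, `p` being the proximal point of `H m`. -/
structure IsDistributedPD3O (K : ∀ m, 𝒳 →L[ℝ] 𝒰 m) (R : 𝒳 → ℝ) (F' : ι → 𝒳 → 𝒳)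
    (H : ∀ m, 𝒰 m → ℝ) (N η : ℝ) (ω : ι → ℝ) (γ : ℕ → ℝ) (x : ℕ → 𝒳) (q a : ℕ → ι → 𝒳)
    (u : ℕ → ∀ m, 𝒰 m) : Prop where
  combination : ∀ k m, a k m = q k m - (ContinuousLinearMap.adjoint (K m)) (u k m)
  primal_prox : ∀ k, IsProxPt (γ k) R ((γ k / N) • ∑ m, a k m) (x (k + 1))
  forward : ∀ k m, q (k + 1) m = ((N * ω m) / γ (k + 1)) • x (k + 1) - F' m (x (k + 1))
  dual_prox : ∀ k m, ∃ p : 𝒰 m,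
    IsProxPt ((γ (k + 1) * η) / (N * ω m)) (H m)
      (((γ (k + 1) * η) / (N * ω m)) •
        (u k m + (1 / η) • K m (((N * ω m) / γ k) • x (k + 1) + q (k + 1) m - q k m))) p ∧
    u (k + 1) m = (u k m + (1 / η) • K m (((N * ω m) / γ k) • x (k + 1)
        + q (k + 1) m - q k m)) - ((N * ω m) / (γ (k + 1) * η)) • p

namespace IsDistributedPD3O

variable {K : ∀ m, 𝒳 →L[ℝ] 𝒰 m} {R : 𝒳 → ℝ} {F' : ι → 𝒳 → 𝒳} {H : ∀ m, 𝒰 m → ℝ} {N η : ℝ}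
  {ω : ι → ℝ} {γ : ℕ → ℝ} {x : ℕ → 𝒳} {q a : ℕ → ι → 𝒳} {u : ℕ → ∀ m, 𝒰 m}
  {xstar rstar : 𝒳} {hstar : ∀ m, 𝒰 m} {k : ℕ}

lemma primalError_succ (hpd : IsDistributedPD3O K R F' H N η ω γ x q a u) (k : ℕ) (m : ι) :
    primalError F' N ω xstar (γ (k + 1))⁻¹ (q (k + 1)) m =
      (N * ω m * (γ (k + 1))⁻¹) • (x (k + 1) - xstar) - (F' m (x (k + 1)) - F' m xstar) := by
  rw [primalError, hpd.forward, div_eq_mul_inv]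
  module

lemma primal_estimate (hpd : IsDistributedPD3O K R F' H N η ω γ x q a u)
    (hsol : IsPrimalDualSolution K R F' H N xstar rstar hstar) (hN : N ≠ 0)
    (hωsum : ∑ m, ω m = 1) {μ : ℝ} (hR : StrongConvexOn Set.univ μ R) (hμ : 0 ≤ μ)
    (hγ : 0 < γ k) :
    ((γ k)⁻¹ + μ) * ‖x (k + 1) - xstar‖ ^ 2 ≤
      N⁻¹ * ∑ m, (⟪primalError F' N ω xstar (γ k)⁻¹ (q k) m, x (k + 1) - xstar⟫
        - ⟪u k m - hstar m, K m (x (k + 1) - xstar)⟫) := by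
  have hres : (γ k)⁻¹ • ((γ k / N) • ∑ m, a k m - xstar) - rstar =
      N⁻¹ • ∑ m, (primalError F' N ω xstar (γ k)⁻¹ (q k) m
        - ContinuousLinearMap.adjoint (K m) (u k m - hstar m)) := by
    have hscale : (γ k)⁻¹ * (γ k / N) = N⁻¹ := by field_simp
    have hshift : N⁻¹ * (N * (γ k)⁻¹) = (γ k)⁻¹ := by field_simp
    have hsum : ∑ m, (N * ω m * (γ k)⁻¹) • xstar = (N * (γ k)⁻¹) • xstar := by
      rw [← Finset.sum_smul, ← Finset.sum_mul, ← Finset.mul_sum, hωsum, mul_one]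
    rw [eq_neg_of_add_eq_zero_left hsol.stationary]
    simp only [hpd.combination, primalError, map_sub, Finset.sum_add_distrib,
      Finset.sum_sub_distrib, hsum, smul_sub, smul_add, smul_smul, hscale, hshift, one_div]
    abel
  have h := (hpd.primal_prox k).mul_norm_sub_sq_le_inner hR hμ hγ hsol.primal
  simpa only [hres, real_inner_smul_left, sum_inner, inner_sub_left,
    ContinuousLinearMap.adjoint_inner_left] using h

lemma exists_subgradient_dual_step (hpd : IsDistributedPD3O K R F' H N η ω γ x q a u) (hN : 0 < N)
    {m : ι} (hω : 0 < ω m) (hH : ConvexOn ℝ Set.univ (H m)) (hη : 0 < η) (hγ : 0 < γ (k + 1)) :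
    ∃ p, IsSubgradientAt (H m) p (u (k + 1) m) ∧
      η • (u k m - u (k + 1) m)
        + K m ((N * ω m / γ k) • x (k + 1) + q (k + 1) m - q k m) = (N * ω m / γ (k + 1)) • p := by
  obtain ⟨p, hp, hup⟩ := hpd.dual_prox k m
  refine ⟨p, ?_, ?_⟩
  · have hsub := hp.isSubgradientAt_moreau hH (by positivity)
    rwa [inv_div, ← hup] at hsub
  · have hscale : η * (N * ω m / (γ (k + 1) * η)) = N * ω m / γ (k + 1) := by field_simp
    rw [hup, ← hscale]
    simp only [smul_sub, smul_add, smul_smul, mul_one_div_cancel hη.ne', one_smul]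
    abel

lemma dual_inner_nonneg (hpd : IsDistributedPD3O K R F' H N η ω γ x q a u)
    (hsol : IsPrimalDualSolution K R F' H N xstar rstar hstar) (hN : 0 < N) {m : ι}
    (hω : 0 < ω m) (hH : ConvexOn ℝ Set.univ (H m)) (hη : ‖K m‖ ^ 2 ≤ η) (hγ : 0 < γ (k + 1)) :
    0 ≤ ⟪u (k + 1) m - hstar m, η • (u k m - hstar m - (u (k + 1) m - hstar m))
      + K m (primalError F' N ω xstar (γ (k + 1))⁻¹ (q (k + 1)) m
        - (primalError F' N ω xstar (γ k)⁻¹ (q k) m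
          - (N * ω m * (γ k)⁻¹) • (x (k + 1) - xstar)))⟫ := by
  obtain hη0 | hη0 := ((sq_nonneg ‖K m‖).trans hη).eq_or_lt
  · have hK : K m = 0 := norm_eq_zero.1 ((sq_nonpos_iff _).1 (hη0 ▸ hη))
    simp [hK, ← hη0]
  obtain ⟨p, hp, hstep⟩ := hpd.exists_subgradient_dual_step hN hω hH hη0 hγ
  have herror : primalError F' N ω xstar (γ (k + 1))⁻¹ (q (k + 1)) m
      - (primalError F' N ω xstar (γ k)⁻¹ (q k) m
        - (N * ω m * (γ k)⁻¹) • (x (k + 1) - xstar)) =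
      (N * ω m / γ k) • x (k + 1) + q (k + 1) m - q k m - (N * ω m / γ (k + 1)) • xstar := by
    simp only [primalError, div_eq_mul_inv]
    module
  rw [herror, sub_sub_sub_cancel_right, map_sub, map_smul, ← add_sub_assoc, hstep, ← smul_sub,
    real_inner_smul_right]
  have hmono := hp.inner_sub_nonneg (hsol.dual m)
  positivity

lemma energy_half_step_le (hpd : IsDistributedPD3O K R F' H N η ω γ x q a u)
    (hsol : IsPrimalDualSolution K R F' H N xstar rstar hstar) (hN : N ≠ 0) (hω : ∀ m, 0 < ω m)
    (hωsum : ∑ m, ω m = 1) {μ : ℝ} (hR : StrongConvexOn Set.univ μ R) (hμ : 0 ≤ μ)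
    (hγ : 0 < γ k) :
    energy K η N ω (fun m => primalError F' N ω xstar (γ k)⁻¹ (q k) m
        - (N * ω m * (γ k)⁻¹) • (x (k + 1) - xstar)) (fun m => u k m - hstar m) ≤
      iterateEnergy K F' N η ω γ q u xstar hstar k
        - ((γ k)⁻¹ ^ 2 + 2 * μ * (γ k)⁻¹) * ‖x (k + 1) - xstar‖ ^ 2 :=
  energy_sub_smul_le hN hω hωsum (inv_nonneg.2 hγ.le)
    (hpd.primal_estimate hsol hN hωsum hR hμ hγ)

lemma mul_norm_sq_le_iterateEnergy (hpd : IsDistributedPD3O K R F' H N η ω γ x q a u)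
    (hsol : IsPrimalDualSolution K R F' H N xstar rstar hstar) (hN : N ≠ 0) (hω : ∀ m, 0 < ω m)
    (hωsum : ∑ m, ω m = 1) (hη : ∀ m, ‖K m‖ ^ 2 ≤ η) {μ : ℝ} (hR : StrongConvexOn Set.univ μ R)
    (hμ : 0 ≤ μ) (hγ : 0 < γ k) :
    ((γ k)⁻¹ ^ 2 + 2 * μ * (γ k)⁻¹) * ‖x (k + 1) - xstar‖ ^ 2 ≤
      iterateEnergy K F' N η ω γ q u xstar hstar k :=
  sub_nonneg.1 <| (energy_nonneg hη hω _ _).trans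
    (hpd.energy_half_step_le hsol hN hω hωsum hR hμ hγ)

lemma iterateEnergy_succ_le (hpd : IsDistributedPD3O K R F' H N η ω γ x q a u)
    (hsol : IsPrimalDualSolution K R F' H N xstar rstar hstar) (hN : 0 < N) (hω : ∀ m, 0 < ω m)
    (hωsum : ∑ m, ω m = 1) (hη : ∀ m, ‖K m‖ ^ 2 ≤ η) (hH : ∀ m, ConvexOn ℝ Set.univ (H m))
    {μ : ℝ} (hR : StrongConvexOn Set.univ μ R) (hμ : 0 ≤ μ) (hγ : 0 < γ k)
    (hγ' : 0 < γ (k + 1)) :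
    iterateEnergy K F' N η ω γ q u xstar hstar (k + 1) ≤
      ∑ m, (N ^ 2 * ω m)⁻¹ * ‖(N * ω m * (γ (k + 1))⁻¹) • (x (k + 1) - xstar)
        - (F' m (x (k + 1)) - F' m xstar)‖ ^ 2
      + (iterateEnergy K F' N η ω γ q u xstar hstar k
        - ((γ k)⁻¹ ^ 2 + 2 * μ * (γ k)⁻¹) * ‖x (k + 1) - xstar‖ ^ 2) := by
  have hdual := energy_le_add_of_inner_nonneg (N := N) hη hω
    fun m => hpd.dual_inner_nonneg hsol hN (hω m) (hH m) (hη m) hγ'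
  simp only [← hpd.primalError_succ]
  exact hdual.trans (by gcongr; exact hpd.energy_half_step_le hsol hN.ne' hω hωsum hR hμ hγ)

lemma eventually_iterateEnergy_succ_le (hpd : IsDistributedPD3O K R F' H N η ω γ x q a u)
    (hsol : IsPrimalDualSolution K R F' H N xstar rstar hstar) (hN : 0 < N) (hω : ∀ m, 0 < ω m)
    (hωsum : ∑ m, ω m = 1) (hη : ∀ m, ‖K m‖ ^ 2 ≤ η) {F : ι → 𝒳 → ℝ}
    (hF : ∀ m z, IsSubgradientAt (F m) z (F' m z))
    (hlip : ∀ m, ∃ l : ℝ, 0 < l ∧ ∀ z z', ‖F' m z - F' m z'‖ ≤ l * ‖z - z'‖)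
    (hH : ∀ m, ConvexOn ℝ Set.univ (H m)) {μF μR κ : ℝ}
    (hFsc : StrongConvexOn Set.univ μF fun z => (1 / N) * ∑ m, F m z)
    (hR : StrongConvexOn Set.univ μR R) (hμR : 0 ≤ μR) (hκ : 0 ≤ κ) (hκ1 : κ < 1)
    (ht : IsInvStepsizes (μF * κ) μR fun k => (γ k)⁻¹)
    (hlim : Tendsto (fun k => (γ k)⁻¹) atTop atTop) :
    ∀ᶠ k in atTop, iterateEnergy K F' N η ω γ q u xstar hstar (k + 1) ≤
      iterateEnergy K F' N η ω γ q u xstar hstar k := by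
  have hforward := ((tendsto_add_atTop_iff_nat 1).2 hlim).eventually
    (eventually_sum_mul_norm_smul_sub_sq_le hN hω hωsum hF hlip hFsc hκ hκ1)
  filter_upwards [hforward, eventually_ge_atTop 1] with k hforward hk
  have hstep := hpd.iterateEnergy_succ_le hsol hN hω hωsum hη hH hR hμR (inv_pos.1 (ht.pos k hk))
    (inv_pos.1 (ht.pos (k + 1) (by omega)))
  have hrec := ht.recursion k hk
  linear_combination hstep + hforward (x (k + 1)) xstar + ‖x (k + 1) - xstar‖ ^ 2 * hrec

end IsDistributedPD3O

theorem distributed_pd3o_accelerated_rate_general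
    (K : ∀ m, 𝒳 →L[ℝ] 𝒰 m) (R : 𝒳 → ℝ) (F : ι → 𝒳 → ℝ) (H : ∀ m, 𝒰 m → ℝ)
    (F' : ι → 𝒳 → 𝒳) (N : ℝ) (hN : 0 < N)
    (hFconv : ∀ m, ConvexOn ℝ Set.univ (F m)) (hHconv : ∀ m, ConvexOn ℝ Set.univ (H m))
    (hFgrad : ∀ m z, HasGradientAt (F m) (F' m z) z)
    (hFlipschitz : ∀ m, ∃ l : ℝ, 0 < l ∧ ∀ z z', ‖F' m z - F' m z'‖ ≤ l * ‖z - z'‖)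
    (ω : ι → ℝ) (hω : ∀ m, 0 < ω m) (hωsum : ∑ m, ω m = 1)
    (μF μR : ℝ) (hμF : 0 ≤ μF) (hμR : 0 ≤ μR) (hμ : 0 < μF + μR)
    (hFsc : StrongConvexOn Set.univ μF fun z => (1 / N) * ∑ m, F m z)
    (hRsc : StrongConvexOn Set.univ μR R)
    (xstar rstar : 𝒳) (hstar : ∀ m, 𝒰 m)
    (hsol : IsPrimalDualSolution K R F' H N xstar rstar hstar)
    (κ : ℝ) (hκ : 0 < κ) (hκ1 : κ < 1)
    (γ : ℕ → ℝ) (hγ1 : 0 < γ 1)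
    (hγrec : ∀ k, 1 ≤ k → γ (k + 1) = acceleratedStepsize (μF * κ) μR (γ k))
    (η : ℝ) (hη : ∀ m, ‖K m‖ ^ 2 ≤ η)
    (x : ℕ → 𝒳) (q a : ℕ → ι → 𝒳) (u : ℕ → ∀ m, 𝒰 m)
    (hpd : IsDistributedPD3O K R F' H N η ω γ x q a u) :
    ∃ c₀ : ℝ, 0 < c₀ ∧
      (∀ k, 1 ≤ k →
        ‖x (k + 1) - xstar‖ ^ 2 ≤ (γ (k + 1)) ^ 2 / (1 - γ (k + 1) * μF * κ) * c₀) ∧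
      ∃ C : ℝ, 0 ≤ C ∧ ∀ k : ℕ, 1 ≤ k → ‖x (k + 1) - xstar‖ ^ 2 ≤ C / ((k : ℝ) + 1) ^ 2 := by
  have ht : IsInvStepsizes (μF * κ) μR fun k => (γ k)⁻¹ :=
    isInvStepsizes_of_acceleratedStepsize hμR hγ1 hγrec
  have ha : 0 ≤ μF * κ := by positivity
  have hab : 0 < μF * κ + μR := by
    obtain hμF0 | hμF0 := hμF.eq_or_lt
    · simpa [← hμF0] using hμ
    · positivity
  have hF : ∀ m z, IsSubgradientAt (F m) z (F' m z) := fun m z =>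
    .of_hasGradientAt (hFconv m) (hFgrad m z)
  obtain ⟨B, hB⟩ := bddAbove_range_of_eventually_succ_le <|
    hpd.eventually_iterateEnergy_succ_le hsol hN hω hωsum hη hF hFlipschitz hHconv hFsc hRsc hμR
      hκ.le hκ1 ht (ht.tendsto_atTop ha hμR hab)
  have hrate := ht.exists_rate ha hμR hab (D := fun k => ‖x k - xstar‖ ^ 2)
    (fun _ => sq_nonneg _) fun k hk =>
      (hpd.mul_norm_sq_le_iterateEnergy hsol hN.ne' hω hωsum hη hRsc hμR
        (inv_pos.1 (ht.pos k hk))).trans (hB (Set.mem_range_self k))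
  simpa only [inv_inv, ← mul_assoc] using hrate

end DistributedPD3O

/-- Theorem 7: `O(1/k²)` rate of the accelerated Distributed PD3O algorithm. -/
theorem distributed_pd3o_accelerated_rate
    {𝒳 : Type*}
    [NormedAddCommGroup 𝒳] [InnerProductSpace ℝ 𝒳] [FiniteDimensional ℝ 𝒳]
    {M : ℕ} (hM : 1 ≤ M)
    {𝒰 : Fin M → Type*}
    [∀ m, NormedAddCommGroup (𝒰 m)] [∀ m, InnerProductSpace ℝ (𝒰 m)]
    [∀ m, FiniteDimensional ℝ (𝒰 m)]
    (K : ∀ m : Fin M, 𝒳 →L[ℝ] 𝒰 m)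
    (R : 𝒳 → ℝ) (F : Fin M → 𝒳 → ℝ) (H : ∀ m : Fin M, 𝒰 m → ℝ)
    (F' : Fin M → 𝒳 → 𝒳)
    (hRconv : ConvexOn ℝ Set.univ R)
    (hFconv : ∀ m, ConvexOn ℝ Set.univ (F m))
    (hHconv : ∀ m, ConvexOn ℝ Set.univ (H m))
    (hFgrad : ∀ m z, HasGradientAt (F m) (F' m z) z)
    (hFlipschitz : ∀ m, ∃ Lm : ℝ, 0 < Lm ∧
      ∀ z z', ‖F' m z - F' m z'‖ ≤ Lm * ‖z - z'‖)
    -- weights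
    (ω : Fin M → ℝ) (hω : ∀ m, 0 < ω m) (hωsum : ∑ m, ω m = 1)
    -- averaged smoothness constant
    (L : ℝ) (hL : 0 < L)
    (havg : ∀ z z' : 𝒳,
      (1 / (M : ℝ)^2) * ∑ m, (1 / ω m) * ‖F' m z - F' m z'‖^2
        ≤ L^2 * ‖z - z'‖^2)
    -- strong convexity of the average of the F_m, and of R
    (μF μR : ℝ) (hμF : 0 ≤ μF) (hμR : 0 ≤ μR) (hμ : 0 < μF + μR)
    (hFsc : ConvexOn ℝ Set.univ fun z =>
      ((1 / (M : ℝ)) * ∑ m, F m z) - μF / 2 * ‖z‖ ^ 2)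
    (hRsc : ConvexOn ℝ Set.univ fun z => R z - μR / 2 * ‖z‖ ^ 2)
    -- Assumption: existence of a primal-dual solution, x* the unique minimizer
    (xstar : 𝒳) (rstar : 𝒳) (hstar : ∀ m : Fin M, 𝒰 m)
    (hrstar : IsSubgradientAt R xstar rstar)
    (hhstar : ∀ m, IsSubgradientAt (H m) (K m xstar) (hstar m))
    (hopt : rstar + (1 / (M : ℝ)) •
      ∑ m, (F' m xstar + (ContinuousLinearMap.adjoint (K m)) (hstar m)) = 0)
    (hxstar : ∀ y, R xstar + (1 / (M : ℝ)) * ∑ m, (F m xstar + H m (K m xstar))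
      ≤ R y + (1 / (M : ℝ)) * ∑ m, (F m y + H m (K m y)))
    -- stepsize rule
    (κ : ℝ) (hκ : 0 < κ) (hκ1 : κ < 1)
    (γ : ℕ → ℝ) (hγ0 : 0 < γ 0) (hγ0' : γ 0 < 2 * (1 - κ) / L)
    (hγ1 : γ 1 = γ 0)
    (hγrec : ∀ k, 1 ≤ k → γ (k+1) =
      (-((γ k)^2 * μF * κ) + γ k * Real.sqrt ((γ k * μF * κ)^2 + 1 + 2 * γ k * μR))
        / (1 + 2 * γ k * μR))
    -- parameter η
    (η : ℝ) (hη : ∀ m, ‖K m‖ ^ 2 ≤ η)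
    -- Distributed PD3O iterates
    (x : ℕ → 𝒳) (q a : ℕ → Fin M → 𝒳) (u : ℕ → ∀ m : Fin M, 𝒰 m)
    (ha0 : ∀ m, a 0 m = q 0 m - (ContinuousLinearMap.adjoint (K m)) (u 0 m))
    (hx : ∀ k, IsProxPt (γ k) R ((γ k / (M : ℝ)) • ∑ m, a k m) (x (k+1)))
    (hq : ∀ k m, q (k+1) m =
      (((M : ℝ) * ω m) / γ (k+1)) • x (k+1) - F' m (x (k+1)))
    (hu : ∀ k m, ∃ p : 𝒰 m,
      IsProxPt ((γ (k+1) * η) / ((M : ℝ) * ω m)) (H m)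
        (((γ (k+1) * η) / ((M : ℝ) * ω m)) •
          (u k m + (1/η) • K m ((((M : ℝ) * ω m) / γ k) • x (k+1)
            + q (k+1) m - q k m))) p ∧
      u (k+1) m = (u k m + (1/η) • K m ((((M : ℝ) * ω m) / γ k) • x (k+1)
            + q (k+1) m - q k m))
        - (((M : ℝ) * ω m) / (γ (k+1) * η)) • p)
    (ha : ∀ k m, a (k+1) m =
      q (k+1) m - (ContinuousLinearMap.adjoint (K m)) (u (k+1) m)) :
    ∃ c₀ : ℝ, 0 < c₀ ∧
      (∀ k, 1 ≤ k →
        ‖x (k+1) - xstar‖^2 ≤ (γ (k+1))^2 / (1 - γ (k+1) * μF * κ) * c₀) ∧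
      ∃ C : ℝ, 0 ≤ C ∧ ∀ k : ℕ, 1 ≤ k →
        ‖x (k+1) - xstar‖^2 ≤ C / ((k : ℝ) + 1)^2 := by
  exact distributed_pd3o_accelerated_rate_general K R F H F' M (Nat.cast_pos.2 hM) hFconv hHconv
    hFgrad hFlipschitz ω hω hωsum μF μR hμF hμR hμ (strongConvexOn_iff_convex.2 hFsc)
    (strongConvexOn_iff_convex.2 hRsc) xstar rstar hstar ⟨hrstar, hhstar, hopt⟩ κ hκ hκ1 γ
    (hγ1.symm ▸ hγ0) (by simpa only [acceleratedStepsize, mul_assoc] using hγrec) η hη x q a u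
    ⟨fun | 0 => ha0 | k + 1 => ha k, hx, hq, hu⟩
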